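/- Let δ>0 and s ∈ (0,1). The function r ↦ G_δ(s,r) is differentiable on (s,1), and for every r ∈ (s,1), with z = z(s,r) = s(1−r)/(r(1−s)), one has d/dr G_δ(s,r) = −K(δ)·s·z^{−1/2}(1−z)^{δ/2+1} ₂F₁((δ+1)/2,(δ+1)/2,δ/2,z) + (K(δ)/2)·((1−s)/(1−r))·z^{1/2}(1−z)^{δ/2} ₂F₁((δ+1)/2,(δ−1)/2,δ/2,z). -/

import Mathlib

open MeasureTheory Real Filter

/-- Ascending Pochhammer symbol `(a)_k = a(a+1)⋯(a+k-1)`. -/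
noncomputable def poch (a : ℝ) (k : ℕ) : ℝ := ∏ i ∈ Finset.range k, (a + i)

/-- Gauss hypergeometric function `₂F₁(a,b,c,z) = ∑ (a)_k (b)_k / (k! (c)_k) z^k`. -/
noncomputable def hyp2F1 (a b c z : ℝ) : ℝ :=
  ∑' k : ℕ, (poch a k * poch b k) / ((Nat.factorial k : ℝ) * poch c k) * z ^ k

/-- `K(δ) = 2 Γ((δ+1)/2)² / Γ(δ/2)²`. -/
noncomputable def Kcoef (δ : ℝ) : ℝ :=
  2 * Real.Gamma ((δ + 1) / 2) ^ 2 / Real.Gamma (δ / 2) ^ 2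

/-- Two-point kernel `G_δ(s,r)`, equal to the second moment `E^δ[X_s X_r]` of a
δ-dimensional Bessel bridge from 0 to 0 over [0,1]. -/
noncomputable def twoPt (δ s r : ℝ) : ℝ :=
  if s < r then
    Kcoef δ * (r - s) ^ (δ / 2 + 1) * (s * (1 - r)) ^ ((1 : ℝ) / 2) *
      (r * (1 - s)) ^ (-((δ + 1) / 2)) *
      hyp2F1 ((δ + 1) / 2) ((δ + 1) / 2) (δ / 2) (s * (1 - r) / (r * (1 - s)))
  else
    Kcoef δ * (s - r) ^ (δ / 2 + 1) * (r * (1 - s)) ^ ((1 : ℝ) / 2) *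
      (s * (1 - r)) ^ (-((δ + 1) / 2)) *
      hyp2F1 ((δ + 1) / 2) ((δ + 1) / 2) (δ / 2) (r * (1 - s) / (s * (1 - r)))

/-- Coefficient `D(s,r)`. -/
noncomputable def Dcoef (s r : ℝ) : ℝ :=
  if s < r then (1 - s) / ((r - s) * (1 - r)) else s / (r * (s - r))

/-- Coefficient `C_k = Γ(k+(δ+1)/2)/(Γ(δ/2) Γ(k+δ/2) k!)`. -/
noncomputable def Ccoef (δ : ℝ) (k : ℕ) : ℝ :=
  Real.Gamma ((k : ℝ) + (δ + 1) / 2) /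
    (Real.Gamma (δ / 2) * Real.Gamma ((k : ℝ) + δ / 2) * (Nat.factorial k : ℝ))

/-- Coefficient `f_k(s,r)`. -/
noncomputable def fcoef (s r : ℝ) (k : ℕ) : ℝ :=
  if s < r then (2 * (r - s)) ^ ((1 : ℝ) / 2 - (k : ℝ)) * (s / r) ^ ((k : ℝ) + 1 / 2)
  else (2 * (s - r)) ^ ((1 : ℝ) / 2 - (k : ℝ)) * ((1 - s) / (1 - r)) ^ ((k : ℝ) + 1 / 2)

/-- `Σ^δ_{r,s}(b) = Σ^δ_r(X_s | b)`, the density-weighted conditional expectation of a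
δ-dimensional Bessel bridge. -/
noncomputable def SigmaRS (δ r s b : ℝ) : ℝ :=
  ((2 : ℝ) ^ (δ / 2 - 1) * (r * (1 - r)) ^ (δ / 2))⁻¹ *
    Real.exp (-(Dcoef s r) * b ^ 2 / 2) *
    ∑' k : ℕ, Ccoef δ k * fcoef s r k * b ^ (2 * k)

/-!
With `z = s(1-r)/(r(1-s))`, `a = b = (δ+1)/2` and `c = δ/2`, the kernel is
`G_δ(s,r) = K(δ) · s(1-r) · z^(c-b) (1-z)^(a+b-c) ₂F₁(a,b;c;z)`, and the two summands of the claimed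
derivative are the two terms of the product rule: the first differentiates `s(1-r)`, the second
the weighted hypergeometric function, whose derivative is again one hypergeometric function,
`d/dz [z^(c-b) (1-z)^(a+b-c) ₂F₁(a,b;c;z)] = (c-b) z^(c-b-1) (1-z)^(a+b-c-1) ₂F₁(a,b-1;c;z)`.
This last formula is equivalent to the contiguous relation
`z(1-z) d/dz ₂F₁(a,b;c;z) = (c-b) ₂F₁(a,b-1;c;z) + (b-c+az) ₂F₁(a,b;c;z)`,
which is checked on the coefficients of the power series.
-/

section PowerSeries

variable {𝕜 F : Type*} [NontriviallyNormedField 𝕜] [NormedAddCommGroup F] [NormedSpace 𝕜 F]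
  [CompleteSpace F]

theorem hasSum_nsmul_smul_deriv_sum {p : FormalMultilinearSeries 𝕜 𝕜 F} {z : 𝕜}
    (hz : ‖z‖ₑ < p.radius) :
    HasSum (fun n : ℕ ↦ n • p n fun _ ↦ z) (z • deriv p.sum z) := by
  have hderiv : HasSum (fun n ↦ p.derivSeries n fun _ ↦ z) (fderiv 𝕜 p.sum z) := by
    rw [FormalMultilinearSeries.fderiv_sum hz]
    exact p.derivSeries.hasSum (by simpa using hz.trans_le p.radius_le_radius_derivSeries)
  have heval := hderiv.mapL (ContinuousLinearMap.apply 𝕜 F z)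
  rw [← hasSum_nat_add_iff' 1]
  simpa only [ContinuousLinearMap.apply_apply, FormalMultilinearSeries.derivSeries_apply_diag,
    fderiv_eq_smul_deriv, Finset.sum_range_one, zero_smul, sub_zero] using heval

end PowerSeries

section Coefficients

variable {𝕂 : Type*} [Field 𝕂]

theorem ascPochhammer_succ_eval_sub_one (b : 𝕂) (n : ℕ) :
    (ascPochhammer 𝕂 (n + 1)).eval (b - 1) = (b - 1) * (ascPochhammer 𝕂 n).eval b := by
  simp [ascPochhammer_succ_left]

theorem ordinaryHypergeometricCoefficient_contiguous [CharZero 𝕂] (a b : 𝕂) {c : 𝕂}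
    (hc : ∀ k : ℕ, c ≠ -k) (n : ℕ) :
    (c - b) * ordinaryHypergeometricCoefficient a (b - 1) c (n + 1) =
      (c - b + (n + 1)) * ordinaryHypergeometricCoefficient a b c (n + 1) -
        (a + n) * ordinaryHypergeometricCoefficient a b c n := by
  have hcn : c + n ≠ 0 := fun h ↦ hc n (eq_neg_of_add_eq_zero_left h)
  have hpoch : (ascPochhammer 𝕂 n).eval c ≠ 0 := by
    rw [Ne, ascPochhammer_eval_eq_zero_iff]
    rintro ⟨k, -, hk⟩
    exact hc k (by rw [hk, neg_neg])
  have hn : (n : 𝕂) + 1 ≠ 0 := n.cast_add_one_ne_zero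
  have hfact : (n.factorial : 𝕂) ≠ 0 := mod_cast n.factorial_ne_zero
  simp only [ordinaryHypergeometricCoefficient]
  rw [ascPochhammer_succ_eval_sub_one]
  simp only [ascPochhammer_succ_eval, Nat.factorial_succ, Nat.cast_mul, Nat.cast_succ]
  field_simp
  ring

end Coefficients

section ContiguousRelation

variable {𝕂 : Type*} [RCLike 𝕂]

theorem one_le_radius_ordinaryHypergeometricSeries (a b c : 𝕂) :
    1 ≤ (ordinaryHypergeometricSeries 𝕂 a b c).radius := by
  by_cases habc : ∀ k : ℕ, (k : 𝕂) ≠ -a ∧ (k : 𝕂) ≠ -b ∧ (k : 𝕂) ≠ -c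
  · exact (ordinaryHypergeometricSeries_radius_eq_one 𝕂 a b c habc).ge
  · obtain ⟨k, hk⟩ : ∃ k : ℕ, k = -a ∨ k = -b ∨ k = -c := by
      simpa only [not_forall, not_and_or, not_not] using habc
    have htop : (ordinaryHypergeometricSeries 𝕂 a b c).radius = ⊤ :=
      FormalMultilinearSeries.radius_eq_top_of_forall_image_add_eq_zero _ (1 + k) fun n ↦
        ordinaryHypergeometricSeries_eq_zero_of_neg_nat a b c hk (by lia)
    exact htop ▸ le_top

variable {z : 𝕂}

theorem enorm_lt_radius_ordinaryHypergeometricSeries (a b c : 𝕂) (hz : ‖z‖ < 1) :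
    ‖z‖ₑ < (ordinaryHypergeometricSeries 𝕂 a b c).radius := by
  refine lt_of_lt_of_le ?_ (one_le_radius_ordinaryHypergeometricSeries a b c)
  rwa [← ofReal_norm, ENNReal.ofReal_lt_one]

theorem differentiableAt_ordinaryHypergeometric (a b c : 𝕂) (hz : ‖z‖ < 1) :
    DifferentiableAt 𝕂 (₂F₁ a b c : 𝕂 → 𝕂) z :=
  (FormalMultilinearSeries.hasFDerivAt_sum
    (enorm_lt_radius_ordinaryHypergeometricSeries a b c hz)).differentiableAt

theorem hasSum_ordinaryHypergeometric (a b c : 𝕂) (hz : ‖z‖ < 1) :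
    HasSum (fun n ↦ ordinaryHypergeometricCoefficient a b c n * z ^ n) (₂F₁ a b c z) := by
  have hsum := (ordinaryHypergeometricSeries 𝕂 a b c).hasSum
    (by simpa using enorm_lt_radius_ordinaryHypergeometricSeries a b c hz)
  simp only [ordinaryHypergeometricSeries_apply_eq, smul_eq_mul] at hsum
  exact hsum

theorem hasSum_mul_deriv_ordinaryHypergeometric (a b c : 𝕂) (hz : ‖z‖ < 1) :
    HasSum (fun n : ℕ ↦ n * (ordinaryHypergeometricCoefficient a b c n * z ^ n))
      (z * deriv (₂F₁ a b c) z) := by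
  have hsum := hasSum_nsmul_smul_deriv_sum
    (enorm_lt_radius_ordinaryHypergeometricSeries a b c hz)
  simp only [ordinaryHypergeometricSeries_apply_eq, smul_eq_mul, nsmul_eq_mul] at hsum
  exact hsum

theorem mul_one_sub_mul_deriv_ordinaryHypergeometric (a b : 𝕂) {c : 𝕂} (hc : ∀ k : ℕ, c ≠ -k)
    (hz : ‖z‖ < 1) :
    z * (1 - z) * deriv (₂F₁ a b c) z =
      (c - b) * ₂F₁ a (b - 1) c z + (b - c + a * z) * ₂F₁ a b c z := by
  have hF := hasSum_ordinaryHypergeometric a b c hz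
  have hzF' := hasSum_mul_deriv_ordinaryHypergeometric a b c hz
  have hlower := (hasSum_ordinaryHypergeometric a (b - 1) c hz).mul_left (c - b)
  have hupper := (hF.mul_left (c - b)).add hzF'
  have hshifted := ((hF.mul_left a).add hzF').mul_left z
  have hcoeff (n : ℕ) :
      (c - b) * (ordinaryHypergeometricCoefficient a (b - 1) c (n + 1) * z ^ (n + 1)) =
        (c - b) * (ordinaryHypergeometricCoefficient a b c (n + 1) * z ^ (n + 1)) +
          (n + 1 : ℕ) * (ordinaryHypergeometricCoefficient a b c (n + 1) * z ^ (n + 1)) -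
        z * (a * (ordinaryHypergeometricCoefficient a b c n * z ^ n) +
          n * (ordinaryHypergeometricCoefficient a b c n * z ^ n)) := by
    push_cast
    linear_combination z ^ (n + 1) * ordinaryHypergeometricCoefficient_contiguous a b hc n
  have hrecombined := (((hasSum_nat_add_iff' 1).2 hupper).sub hshifted).congr_fun hcoeff
  have hvalue := ((hasSum_nat_add_iff' 1).2 hlower).unique hrecombined
  simp only [Finset.sum_range_one, ordinaryHypergeometricCoefficient, ascPochhammer_zero,
    Polynomial.eval_one, Nat.factorial_zero, Nat.cast_one, Nat.cast_zero, inv_one,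
    pow_zero] at hvalue
  linear_combination -hvalue

end ContiguousRelation

theorem hasDerivAt_rpow_mul_one_sub_rpow_mul_ordinaryHypergeometric (a b : ℝ) {c z : ℝ}
    (hc : ∀ k : ℕ, c ≠ -k) (hz : z ∈ Set.Ioo (0 : ℝ) 1) :
    HasDerivAt (fun x ↦ x ^ (c - b) * (1 - x) ^ (a + b - c) * ₂F₁ a b c x)
      ((c - b) * z ^ (c - b - 1) * (1 - z) ^ (a + b - c - 1) * ₂F₁ a (b - 1) c z) z := by
  obtain ⟨hz0, hz1⟩ := hz
  have hz1' : 0 < 1 - z := sub_pos.2 hz1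
  have hnorm : ‖z‖ < 1 := by rwa [Real.norm_of_nonneg hz0.le]
  have hpow := (hasDerivAt_id z).rpow_const (p := c - b) (.inl hz0.ne')
  have hpow' := ((hasDerivAt_id z).const_sub 1).rpow_const (p := a + b - c) (.inl hz1'.ne')
  have hF := (differentiableAt_ordinaryHypergeometric a b c hnorm).hasDerivAt
  refine ((hpow.mul hpow').mul hF).congr_deriv ?_
  have hsplit : z ^ (c - b) = z ^ (c - b - 1) * z := by
    rw [← Real.rpow_add_one hz0.ne', sub_add_cancel]
  have hsplit' : (1 - z) ^ (a + b - c) = (1 - z) ^ (a + b - c - 1) * (1 - z) := by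
    rw [← Real.rpow_add_one hz1'.ne', sub_add_cancel]
  simp only [id_eq, Pi.mul_apply, hsplit, hsplit']
  linear_combination z ^ (c - b - 1) * (1 - z) ^ (a + b - c - 1) *
    mul_one_sub_mul_deriv_ordinaryHypergeometric a b hc hnorm

theorem poch_eq_ascPochhammer_eval (a : ℝ) (n : ℕ) : poch a n = (ascPochhammer ℝ n).eval a := by
  induction n with
  | zero => simp [poch]
  | succ n ih => rw [ascPochhammer_succ_eval, ← ih, poch, Finset.prod_range_succ, poch]

theorem hyp2F1_eq_ordinaryHypergeometric (a b c : ℝ) : hyp2F1 a b c = ₂F₁ a b c := by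
  ext z
  simp only [hyp2F1, ordinaryHypergeometric_eq_tsum, poch_eq_ascPochhammer_eval, smul_eq_mul]
  exact tsum_congr fun n ↦ by ring

/-- The variable `z(s,r) = s(1-r) / (r(1-s))` of the hypergeometric factor of `G_δ(s,r)`, in terms
of which the kernel and its derivatives are expressed. It lies in `(0,1)` for `0 < s < r < 1`. -/
noncomputable def crossRatio (s r : ℝ) : ℝ := s * (1 - r) / (r * (1 - s))

section CrossRatio

variable {s r : ℝ}

theorem one_sub_crossRatio (hr : r ≠ 0) (hs : 1 - s ≠ 0) :
    1 - crossRatio s r = (r - s) / (r * (1 - s)) := by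
  rw [crossRatio]
  field_simp
  ring

theorem crossRatio_mem_Ioo (hs : 0 < s) (hr : r ∈ Set.Ioo s 1) :
    crossRatio s r ∈ Set.Ioo (0 : ℝ) 1 := by
  have hs' : 0 < 1 - s := by linarith [hr.1, hr.2]
  have hr0 : 0 < r := hs.trans hr.1
  refine ⟨div_pos (mul_pos hs (sub_pos.2 hr.2)) (mul_pos hr0 hs'), sub_pos.1 ?_⟩
  rw [one_sub_crossRatio hr0.ne' hs'.ne']
  exact div_pos (sub_pos.2 hr.1) (mul_pos hr0 hs')

theorem hasDerivAt_crossRatio (hr : r ≠ 0) (hs : 1 - s ≠ 0) :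
    HasDerivAt (crossRatio s) (-s / (r ^ 2 * (1 - s))) r := by
  have hnum : HasDerivAt (fun x ↦ s * (1 - x)) (s * -1) r :=
    ((hasDerivAt_id r).const_sub 1).const_mul s
  have hden : HasDerivAt (fun x ↦ x * (1 - s)) (1 * (1 - s)) r :=
    (hasDerivAt_id r).mul_const (1 - s)
  refine (hnum.div hden (mul_ne_zero hr hs)).congr_deriv ?_
  field_simp
  ring

end CrossRatio

/-- The function `φ` of the cross-ratio for which `G_δ(s,r) = K(δ) · s(1-r) · φ(z(s,r))`. -/
noncomputable def twoPtProfile (δ z : ℝ) : ℝ :=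
  z ^ (-(1 : ℝ) / 2) * (1 - z) ^ (δ / 2 + 1) * hyp2F1 ((δ + 1) / 2) ((δ + 1) / 2) (δ / 2) z

theorem twoPt_eq_mul_twoPtProfile (δ : ℝ) {s r : ℝ} (hs : 0 < s) (hr : r ∈ Set.Ioo s 1) :
    twoPt δ s r = Kcoef δ * (s * (1 - r)) * twoPtProfile δ (crossRatio s r) := by
  have hs' : 0 < 1 - s := by linarith [hr.1, hr.2]
  have hr0 : 0 < r := hs.trans hr.1
  have hnum : 0 < s * (1 - r) := mul_pos hs (sub_pos.2 hr.2)
  have hden : 0 < r * (1 - s) := mul_pos hr0 hs'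
  have hnum_pow : (s * (1 - r)) ^ ((1 : ℝ) / 2) = s * (1 - r) * (s * (1 - r)) ^ (-(1 : ℝ) / 2) := by
    rw [← Real.rpow_one_add' hnum.le (by norm_num)]
    norm_num
  have hden_pow : (r * (1 - s)) ^ (-((δ + 1) / 2)) =
      ((r * (1 - s)) ^ (-(1 : ℝ) / 2))⁻¹ * ((r * (1 - s)) ^ (δ / 2 + 1))⁻¹ := by
    rw [← Real.rpow_neg hden.le, ← Real.rpow_neg hden.le, ← Real.rpow_add hden]
    ring_nf
  rw [twoPtProfile, one_sub_crossRatio hr0.ne' hs'.ne', crossRatio, Real.div_rpow hnum.le hden.le,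
    Real.div_rpow (sub_pos.2 hr.1).le hden.le, twoPt, if_pos hr.1, hnum_pow, hden_pow]
  ring

theorem hasDerivAt_twoPtProfile {δ z : ℝ} (hδ : ∀ k : ℕ, δ / 2 ≠ -k)
    (hz : z ∈ Set.Ioo (0 : ℝ) 1) :
    HasDerivAt (twoPtProfile δ)
      (-1 / 2 * z ^ (-(3 : ℝ) / 2) * (1 - z) ^ (δ / 2) *
        hyp2F1 ((δ + 1) / 2) ((δ - 1) / 2) (δ / 2) z) z := by
  have h := hasDerivAt_rpow_mul_one_sub_rpow_mul_ordinaryHypergeometric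
    ((δ + 1) / 2) ((δ + 1) / 2) hδ hz
  rwa [← hyp2F1_eq_ordinaryHypergeometric, ← hyp2F1_eq_ordinaryHypergeometric,
    show δ / 2 - (δ + 1) / 2 = -1 / 2 by ring,
    show (δ + 1) / 2 + (δ + 1) / 2 - δ / 2 = δ / 2 + 1 by ring,
    show (δ + 1) / 2 - 1 = (δ - 1) / 2 by ring, show (-1 : ℝ) / 2 - 1 = -3 / 2 by norm_num,
    add_sub_cancel_right] at h

theorem twoPt_first_derivative_right_general {δ s r : ℝ} (hδ : ∀ k : ℕ, δ / 2 ≠ -k) (hs : 0 < s)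
    (hr : r ∈ Set.Ioo s 1) :
    HasDerivAt (twoPt δ s)
      (-(Kcoef δ) * s * crossRatio s r ^ (-(1 : ℝ) / 2) * (1 - crossRatio s r) ^ (δ / 2 + 1) *
          hyp2F1 ((δ + 1) / 2) ((δ + 1) / 2) (δ / 2) (crossRatio s r)
        + Kcoef δ / 2 * ((1 - s) / (1 - r)) * crossRatio s r ^ ((1 : ℝ) / 2) *
          (1 - crossRatio s r) ^ (δ / 2) *
          hyp2F1 ((δ + 1) / 2) ((δ - 1) / 2) (δ / 2) (crossRatio s r)) r := by
  have hs' : 1 - s ≠ 0 := by linarith [hr.1, hr.2]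
  have hr0 : r ≠ 0 := (hs.trans hr.1).ne'
  have hr1 : 1 - r ≠ 0 := (sub_pos.2 hr.2).ne'
  have hz := crossRatio_mem_Ioo hs hr
  have hprefactor : HasDerivAt (fun x ↦ Kcoef δ * (s * (1 - x))) (Kcoef δ * (s * -1)) r :=
    (((hasDerivAt_id r).const_sub 1).const_mul s).const_mul _
  have hprofile := (hasDerivAt_twoPtProfile hδ hz).comp r (hasDerivAt_crossRatio hr0 hs')
  have heq : twoPt δ s =ᶠ[nhds r]
      fun x ↦ Kcoef δ * (s * (1 - x)) * twoPtProfile δ (crossRatio s x) := by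
    filter_upwards [Ioo_mem_nhds hr.1 hr.2] with x hx using twoPt_eq_mul_twoPtProfile δ hs hx
  refine ((hprefactor.mul hprofile).congr_of_eventuallyEq heq).congr_deriv ?_
  have hpow : crossRatio s r ^ ((1 : ℝ) / 2) =
      crossRatio s r ^ (-(3 : ℝ) / 2) * crossRatio s r ^ 2 := by
    rw [← Real.rpow_add_natCast hz.1.ne']
    norm_num
  have hchain : s * (1 - r) * (s / (r ^ 2 * (1 - s))) =
      (1 - s) / (1 - r) * crossRatio s r ^ 2 := by
    rw [crossRatio]
    field_simp
  rw [hpow, Function.comp_apply, twoPtProfile]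
  linear_combination (Kcoef δ / 2 * crossRatio s r ^ (-(3 : ℝ) / 2) *
    (1 - crossRatio s r) ^ (δ / 2) *
    hyp2F1 ((δ + 1) / 2) ((δ - 1) / 2) (δ / 2) (crossRatio s r)) * hchain

theorem twoPt_first_derivative_right (δ : ℝ) (hδ : 0 < δ) (s : ℝ) (hs : s ∈ Set.Ioo (0 : ℝ) 1)
    (r : ℝ) (hr : r ∈ Set.Ioo s 1) :
    HasDerivAt (fun r => twoPt δ s r)
      (-(Kcoef δ) * s * (s * (1 - r) / (r * (1 - s))) ^ (-(1 : ℝ) / 2) *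
          (1 - s * (1 - r) / (r * (1 - s))) ^ (δ / 2 + 1) *
          hyp2F1 ((δ + 1) / 2) ((δ + 1) / 2) (δ / 2) (s * (1 - r) / (r * (1 - s)))
        + Kcoef δ / 2 * ((1 - s) / (1 - r)) * (s * (1 - r) / (r * (1 - s))) ^ ((1 : ℝ) / 2) *
          (1 - s * (1 - r) / (r * (1 - s))) ^ (δ / 2) *
          hyp2F1 ((δ + 1) / 2) ((δ - 1) / 2) (δ / 2) (s * (1 - r) / (r * (1 - s)))) r := by
  have hδ' (k : ℕ) : δ / 2 ≠ -k := ne_of_gt ((neg_nonpos.2 k.cast_nonneg).trans_lt (half_pos hδ))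
  exact twoPt_first_derivative_right_general hδ' hs.1 hr
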